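/- arXiv:2211.05747 — 3 statements merged into one kernel-verified Lean document; each statement's English description precedes it below -/
import Mathlib

section
/- Let θ ≥ 1/2, ε > 0, C₁ > 0, C₂ > 0, and K > 0 satisfy K² ≤ C₂ / (6 C₁² (2θ + 2ε)). Let g : ℝ → ℝ be differentiable with g(t) ≥ 0 for all t ∈ ℝ. Assume: (i) g(t) ≥ K² (|t| + 2)^(−2θ−2ε) for all t with |t| ≤ 1; and (ii) |g′(t)| ≥ (C₂ / C₁²) (|t| + 2)^(−2θ−ε) − 3 g(t) for all t with |t| ≥ 1. Then g(t) ≥ K² (|t| + 2)^(−2θ−2ε) for all t ∈ ℝ. -/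
theorem aux_pos (A B C K : ℝ) (hA : 1 < A) (hB : -A ≤ B) (hK : 0 < K)
    (hC : 6 * A * K ^ 2 ≤ C) (g : ℝ → ℝ) (hg : Differentiable ℝ g)
    (hgnn : ∀ t : ℝ, 0 ≤ g t)
    (h1 : K ^ 2 * (1 + 2 : ℝ) ^ (-A) ≤ g 1)
    (h2 : ∀ t : ℝ, 1 ≤ t → C * (t + 2) ^ B - 3 * g t ≤ |deriv g t|) :
    ∀ t : ℝ, 1 ≤ t → K ^ 2 * (t + 2) ^ (-A) ≤ g t := by
  obtain ⟨f, hf⟩ : ∃ f : ℝ → ℝ, f = fun t => K ^ 2 * (t + 2) ^ (-A) := ⟨_, rfl⟩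
  have hfa : ∀ t, K ^ 2 * (t + 2) ^ (-A) = f t := fun t => by rw [hf]
  simp only [hfa]
  rw [hfa] at h1
  have hfpos : ∀ t, 1 ≤ t → 0 < f t := fun t ht => by
    rw [hf]; have : 0 < t + 2 := by linarith
    positivity
  have hfd : ∀ t, 1 ≤ t → HasDerivAt f (-A * f t / (t + 2)) t := fun t ht => by
    have hp : 0 < t + 2 := by linarith
    have := (((hasDerivAt_id t).add_const 2).rpow_const (p := -A) (Or.inl hp.ne')).const_mul (K ^ 2)
    simp only [id] at this
    rw [Real.rpow_sub_one hp.ne'] at this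
    rw [hf]
    refine HasDerivAt.congr_deriv this ?_
    simp only []
    ring
  have hfc : ContinuousOn f (Set.Ici 1) := fun t ht => (hfd t ht).continuousAt.continuousWithinAt
  have hgd : ∀ t, HasDerivAt g (deriv g t) t := fun t => (hg t).hasDerivAt
  -- small derivative of f
  have hfs : ∀ t, 1 ≤ t → -A * f t ≤ 3 * (-A * f t / (t + 2)) := fun t ht => by
    have h := hfpos t ht
    have hp : 0 < t + 2 := by linarith
    rw [← mul_div_assoc, le_div_iff₀ hp]
    have : 0 < A * f t := by positivity
    nlinarith
  -- key bound
  have key : ∀ t, 1 ≤ t → g t < f t → 3 * A * f t < |deriv g t| := fun t ht hlt => by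
    have h := h2 t ht
    have hp : 0 < t + 2 := by linarith
    have e1 : (t + 2) ^ (-A) ≤ (t + 2) ^ B := Real.rpow_le_rpow_of_exponent_le (by linarith) hB
    have e2 : 6 * A * f t ≤ C * (t + 2) ^ B := by
      calc 6 * A * f t = 6 * A * K ^ 2 * (t + 2) ^ (-A) := by rw [hf]; ring
        _ ≤ C * (t + 2) ^ B := by
          have : 0 ≤ (t+2)^(-A) := by positivity
          have : 0 ≤ 6 * A * K ^ 2 := by positivity
          have : 0 ≤ C := by linarith
          gcongr
    have := hfpos t ht
    nlinarith
  by_contra! hcon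
  obtain ⟨t, ht, hlt⟩ := hcon
  -- step 1: point c
  obtain ⟨c, hc1, hcG, hcd⟩ : ∃ c, 1 ≤ c ∧ g c < f c ∧ deriv g c < 0 := by
    have hcl : IsCompact (Set.Icc 1 t ∩ {s | f s ≤ g s}) := by
      apply isCompact_Icc.of_isClosed_subset _ Set.inter_subset_left
      have hcn : ContinuousOn (fun s => g s - f s) (Set.Icc 1 t) :=
        hg.continuous.continuousOn.sub (hfc.mono Set.Icc_subset_Ici_self)
      have := hcn.preimage_isClosed_of_isClosed isClosed_Icc (isClosed_Ici (a := (0:ℝ)))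
      convert this using 2
      ext s; simp
    obtain ⟨a, ⟨⟨ha1, hat⟩, ha2⟩, hamax⟩ := hcl.exists_isGreatest ⟨1, ⟨le_rfl, ht⟩, h1⟩
    simp only [Set.mem_ofPred_eq] at ha2
    have hat' : a < t := lt_of_le_of_ne hat (by rintro rfl; linarith)
    obtain ⟨c, ⟨hca, hct⟩, hc⟩ := exists_hasDerivAt_eq_slope (fun s => g s - f s)
      (fun s => deriv g s - (-A * f s / (s + 2))) hat'
      (hg.continuous.continuousOn.sub (hfc.mono fun s hs => ha1.trans hs.1))
      (fun s hs => (hgd s).sub (hfd s (ha1.trans hs.1.le)))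
    have hc1 : 1 ≤ c := by linarith
    refine ⟨c, hc1, ?_, ?_⟩
    · by_contra! hh
      have := hamax ⟨⟨hc1, hct.le⟩, hh⟩
      linarith
    · have : ((g t - f t) - (g a - f a)) / (t - a) < 0 :=
        div_neg_of_neg_of_pos (by linarith) (by linarith)
      have h3 : 0 < A * f c / (c + 2) := by
        have := hfpos c hc1
        have : 0 < c + 2 := by linarith
        positivity
      have h4 : -A * f c / (c + 2) = -(A * f c / (c + 2)) := by ring
      linarith
  -- negativity via Darboux
  have darb : ∀ S : Set ℝ, Convex ℝ S → c ∈ S → (∀ s ∈ S, 1 ≤ s ∧ g s < f s) →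
      ∀ s ∈ S, deriv g s < -(3 * A * f s) := fun S hS hcS hSs s hs => by
    have hne : ∀ x ∈ S, deriv g x ≠ 0 := fun x hx h0 => by
      have := key x (hSs x hx).1 (hSs x hx).2
      have h5 := hfpos x (hSs x hx).1
      rw [h0, abs_zero] at this
      have : 0 < 3 * A * f x := by positivity
      linarith
    rcases hasDerivWithinAt_forall_lt_or_forall_gt_of_forall_ne hS
      (fun x _ => (hgd x).hasDerivWithinAt) hne with h | h
    · have := key s (hSs s hs).1 (hSs s hs).2
      rw [abs_of_neg (h s hs)] at this
      linarith
    · exact absurd (h c hcS) (by linarith)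
  -- general monotonicity
  have mono : ∀ k : ℝ, 0 ≤ k → k ≤ 3 → ∀ b, c ≤ b → (∀ s ∈ Set.Ico c b, g s < f s) →
      g b - k * f b ≤ g c - k * f c := fun k hk0 hk b hb hS => by
    rcases hb.eq_or_lt with rfl | hb'
    · exact le_rfl
    have hd := darb (Set.Ico c b) (convex_Ico c b) ⟨le_rfl, hb'⟩
      (fun s hs => ⟨hc1.trans hs.1, hS s hs⟩)
    have hanti : AntitoneOn (fun s => g s - k * f s) (Set.Icc c b) := by
      apply antitoneOn_of_hasDerivWithinAt_nonpos (convex_Icc c b)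
        (f' := fun s => deriv g s - k * (-A * f s / (s + 2)))
      · exact hg.continuous.continuousOn.sub
          (continuousOn_const.mul (hfc.mono fun s hs => hc1.trans hs.1))
      · intro s hs
        rw [interior_Icc] at hs
        exact ((hgd s).sub ((hfd s (hc1.trans hs.1.le)).const_mul k)).hasDerivWithinAt
      · intro s hs
        rw [interior_Icc] at hs
        have h6 := hd s ⟨hs.1.le, hs.2⟩
        have hs1 : 1 ≤ s := hc1.trans hs.1.le
        have h7 := hfs s hs1
        have h8 := hfpos s hs1
        have : 0 < A * f s := by positivity
        nlinarith
    exact hanti ⟨le_rfl, hb⟩ ⟨hb, le_rfl⟩ hb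
  -- step 2: stays below
  have below : ∀ b, c ≤ b → g b < f b := by
    by_contra! hh
    obtain ⟨b₀, hb₀, hb₀'⟩ := hh
    have hcl : IsCompact (Set.Icc c b₀ ∩ {s | f s ≤ g s}) := by
      apply isCompact_Icc.of_isClosed_subset _ Set.inter_subset_left
      have hcn : ContinuousOn (fun s => g s - f s) (Set.Icc c b₀) :=
        hg.continuous.continuousOn.sub (hfc.mono fun s hs => hc1.trans hs.1)
      have := hcn.preimage_isClosed_of_isClosed isClosed_Icc (isClosed_Ici (a := (0:ℝ)))
      convert this using 2
      ext s; simp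
    obtain ⟨b, ⟨⟨hb1, hbt⟩, hb2⟩, hbmin⟩ := hcl.exists_isLeast ⟨b₀, ⟨hb₀, le_rfl⟩, hb₀'⟩
    simp only [Set.mem_ofPred_eq] at hb2
    have := mono 1 (by norm_num) (by norm_num) b hb1 (fun s hs => by
      by_contra! h9
      have := hbmin ⟨⟨hs.1, hs.2.le.trans hbt⟩, h9⟩
      linarith [hs.2])
    linarith
  have hlim : Filter.Tendsto f Filter.atTop (nhds 0) := by
    have := ((tendsto_rpow_neg_atTop (y := A) (by linarith)).comp
      (Filter.tendsto_atTop_add_const_right Filter.atTop (2:ℝ) Filter.tendsto_id)).const_mul (K ^ 2)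
    rw [mul_zero] at this
    rw [hf]
    exact this
  have hcp := hfpos c hc1
  obtain ⟨b, hb, hcb⟩ := ((hlim.eventually_lt_const (show 0 < f c / 2 by linarith)).and
    (Filter.eventually_ge_atTop c)).exists
  have := mono 2 (by norm_num) (by norm_num) b hcb (fun s hs => below s hs.1)
  have := hgnn b
  linarith

theorem stmt_0
    (θ ε C₁ C₂ K : ℝ)
    (hθ : 1 / 2 ≤ θ) (hε : 0 < ε) (hC₁ : 0 < C₁) (hC₂ : 0 < C₂) (hK : 0 < K)
    (hK2 : K ^ 2 ≤ C₂ / (6 * C₁ ^ 2 * (2 * θ + 2 * ε)))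
    (g : ℝ → ℝ) (hg : Differentiable ℝ g)
    (hgnn : ∀ t : ℝ, 0 ≤ g t)
    (h1 : ∀ t : ℝ, |t| ≤ 1 → K ^ 2 * (|t| + 2) ^ (-2 * θ - 2 * ε) ≤ g t)
    (h2 : ∀ t : ℝ, 1 ≤ |t| →
      C₂ / C₁ ^ 2 * (|t| + 2) ^ (-2 * θ - ε) - 3 * g t ≤ |deriv g t|) :
    ∀ t : ℝ, K ^ 2 * (|t| + 2) ^ (-2 * θ - 2 * ε) ≤ g t := by
  intro t
  have hA : 1 < 2 * θ + 2 * ε := by linarith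
  have hC : 6 * (2 * θ + 2 * ε) * K ^ 2 ≤ C₂ / C₁ ^ 2 := by
    rw [le_div_iff₀ (by positivity)] at hK2 ⊢
    linarith
  have hB : -(2 * θ + 2 * ε) ≤ -2 * θ - ε := by linarith
  have hE : -2 * θ - 2 * ε = -(2 * θ + 2 * ε) := by ring
  rw [hE] at h1 ⊢
  rcases le_total |t| 1 with h | h
  · exact h1 t h
  rcases le_total 0 t with h0 | h0
  · rw [abs_of_nonneg h0] at h ⊢
    refine aux_pos _ _ _ K hA hB hK hC g hg hgnn ?_ ?_ t h
    · simpa using h1 1 (by simp)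
    · intro s hs
      have := h2 s (hs.trans (le_abs_self s))
      rwa [abs_of_nonneg (by linarith : 0 ≤ s)] at this
  · rw [abs_of_nonpos h0] at h ⊢
    have := aux_pos _ _ _ K hA hB hK hC (fun s => g (-s)) (hg.comp differentiable_neg)
      (fun s => hgnn _) ?_ ?_ (-t) h
    · simpa using this
    · simpa using h1 (-1) (by simp)
    · intro s hs
      have := h2 (-s) (by rw [abs_neg]; exact hs.trans (le_abs_self s))
      rw [abs_neg, abs_of_nonneg (by linarith : 0 ≤ s)] at this
      rw [deriv_comp_neg, abs_neg]
      exact this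
end

section
/- Let θ ≥ 1/2, ε > 0, C₁ > 0, C₂ > 0, and K > 0 satisfy K² ≤ C₂ / (6 C₁² (2θ + 2ε)). Let g : ℝ → ℝ be differentiable with g(t) ≥ 0 for all t ≥ 0. Assume: (i) g(t) ≥ K² (t + 2)^(−2θ−2ε) for all t ∈ [0, 1]; and (ii) |g′(t)| ≥ (C₂ / C₁²) (t + 2)^(−2θ−ε) − 3 g(t) for all t ≥ 1. Then g(t) ≥ K² (t + 2)^(−2θ−2ε) for all t ≥ 0. -/
theorem aux_core (g f f' : ℝ → ℝ) (hg : Differentiable ℝ g)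
    (hgnn : ∀ t : ℝ, 0 ≤ t → 0 ≤ g t)
    (hf : ∀ t : ℝ, 1 ≤ t → HasDerivAt f (f' t) t)
    (hf' : ∀ t : ℝ, 1 ≤ t → f' t < 0)
    (hfpos : ∀ t : ℝ, 1 ≤ t → 0 < f t)
    (hlim : Filter.Tendsto f Filter.atTop (nhds 0))
    (h1 : f 1 ≤ g 1)
    (key : ∀ t : ℝ, 1 ≤ t → g t < f t → 3 * (- f' t) ≤ |deriv g t|) :
    ∀ t : ℝ, 1 ≤ t → f t ≤ g t := by
  intro t0 ht0
  by_contra! hlt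
  have hfc : ContinuousOn f (Set.Ici 1) := fun x hx => (hf x hx).continuousAt.continuousWithinAt
  have hgc : Continuous g := hg.continuous
  have hanti : ∀ x y : ℝ, 1 ≤ x → x ≤ y → f y ≤ f x := by
    have : AntitoneOn f (Set.Ici 1) := by
      apply antitoneOn_of_deriv_nonpos (convex_Ici 1) hfc
      · intro x hx
        rw [interior_Ici] at hx
        exact (hf x (le_of_lt hx)).differentiableAt.differentiableWithinAt
      · intro x hx
        rw [interior_Ici] at hx
        rw [(hf x (le_of_lt hx)).deriv]
        exact (hf' x (le_of_lt hx)).le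
    intro x y hx hxy
    exact this hx (le_trans hx hxy) hxy
  -- find c
  obtain ⟨c, hc1, hcl, hcd⟩ : ∃ c, 1 ≤ c ∧ g c < f c ∧ deriv g c < 0 := by
    set S : Set ℝ := {x ∈ Set.Icc 1 t0 | f x ≤ g x} with hS
    have hScl : IsClosed S := by
      apply isClosed_Icc.isClosed_le (hfc.mono (fun x hx => hx.1)) hgc.continuousOn
    have hSne : S.Nonempty := ⟨1, ⟨le_refl _, ht0⟩, h1⟩
    have hSb : BddAbove S := ⟨t0, fun x hx => hx.1.2⟩
    have hs := hScl.csSup_mem hSne hSb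
    set s := sSup S with hsdef
    have hst : s < t0 := by
      rcases lt_or_eq_of_le hs.1.2 with h | h
      · exact h
      · have := hs.2
        rw [h] at this
        linarith
    have hs1 : 1 ≤ s := hs.1.1
    obtain ⟨c, hc, hceq⟩ := exists_hasDerivAt_eq_slope (fun x => g x - f x)
      (fun x => deriv g x - f' x) hst
      (hgc.continuousOn.sub (hfc.mono (fun x hx => le_trans hs1 hx.1)))
      (fun x hx => (hg x).hasDerivAt.sub (hf x (le_trans hs1 hx.1.le)))
    have hc1 : 1 ≤ c := le_trans hs1 hc.1.le
    refine ⟨c, hc1, ?_, ?_⟩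
    · by_contra! hcon
      have : c ≤ s := le_csSup hSb ⟨⟨hc1, hc.2.le⟩, hcon⟩
      linarith [hc.1]
    · have h3 : deriv g c - f' c < 0 := by
        rw [hceq]
        apply div_neg_of_neg_of_pos
        · have := hs.2
          linarith
        · linarith
      linarith [hf' c hc1]
  -- propagate
  have prop : ∀ d, c < d → (∀ x, c ≤ x → x < d → g x < f x) →
      g d - 3 * f d ≤ g c - 3 * f c := by
    intro d hd hx
    have hder : ∀ x ∈ Set.Ico c d, deriv g x < 0 := by
      have := hasDerivWithinAt_forall_lt_or_forall_gt_of_forall_ne (f := g) (f' := deriv g)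
        (s := Set.Ico c d) (m := 0) (convex_Ico c d)
        (fun x _ => (hg x).hasDerivAt.hasDerivWithinAt) (by
          intro x hxx h0
          have := key x (le_trans hc1 hxx.1) (hx x hxx.1 hxx.2)
          rw [h0, abs_zero] at this
          linarith [hf' x (le_trans hc1 hxx.1)])
      rcases this with h | h
      · exact h
      · have := h c ⟨le_refl _, hd⟩
        linarith
    have hD : ∀ x, 1 ≤ x → HasDerivAt (fun x => g x - 3 * f x) (deriv g x - 3 * f' x) x :=
      fun x hx => (hg x).hasDerivAt.sub ((hf x hx).const_mul 3)
    have : AntitoneOn (fun x => g x - 3 * f x) (Set.Icc c d) := by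
      apply antitoneOn_of_deriv_nonpos (convex_Icc c d)
      · exact fun x hx => (hD x (le_trans hc1 hx.1)).continuousAt.continuousWithinAt
      · intro x hx
        rw [interior_Icc] at hx
        exact (hD x (le_trans hc1 hx.1.le)).differentiableAt.differentiableWithinAt
      · intro x hxx
        rw [interior_Icc] at hxx
        have hx1 := le_trans hc1 hxx.1.le
        rw [(hD x hx1).deriv]
        have h4 := key x hx1 (hx x hxx.1.le hxx.2)
        rw [abs_of_neg (hder x ⟨hxx.1.le, hxx.2⟩)] at h4
        linarith
    exact this ⟨le_refl _, hd.le⟩ ⟨hd.le, le_refl _⟩ hd.le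
  have hall : ∀ x, c ≤ x → g x < f x := by
    by_contra! hcon
    obtain ⟨y, hy, hyf⟩ := hcon
    set S : Set ℝ := {x ∈ Set.Ici c | f x ≤ g x} with hS
    have hScl : IsClosed S := by
      apply isClosed_Ici.isClosed_le (hfc.mono (fun x hx => le_trans hc1 hx)) hgc.continuousOn
    have hSb : BddBelow S := ⟨c, fun x hx => hx.1⟩
    have hs := hScl.csInf_mem ⟨y, hy, hyf⟩ hSb
    set d := sInf S with hsdef
    have hcd' : c < d := by
      rcases lt_or_eq_of_le (show c ≤ d from hs.1) with h | h
      · exact h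
      · have := hs.2
        rw [← h] at this
        linarith
    have := prop d hcd' (by
      intro x hx hxd
      by_contra! h5
      have : d ≤ x := csInf_le hSb ⟨hx, h5⟩
      linarith)
    have h6 := hanti c d hc1 hcd'.le
    have h7 := hs.2
    linarith
  have hfc0 := hfpos c hc1
  obtain ⟨T, hT, hcT⟩ := ((hlim.eventually (gt_mem_nhds (show 0 < f c / 3 by linarith))).and
    (Filter.eventually_gt_atTop c)).exists
  have := prop T hcT (fun x hx _ => hall x hx)
  have h8 := hgnn T (by linarith)
  linarith

theorem stmt_1
    (θ ε C₁ C₂ K : ℝ)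
    (hθ : 1 / 2 ≤ θ) (hε : 0 < ε) (hC₁ : 0 < C₁) (hC₂ : 0 < C₂) (hK : 0 < K)
    (hK2 : K ^ 2 ≤ C₂ / (6 * C₁ ^ 2 * (2 * θ + 2 * ε)))
    (g : ℝ → ℝ) (hg : Differentiable ℝ g)
    (hgnn : ∀ t : ℝ, 0 ≤ t → 0 ≤ g t)
    (h1 : ∀ t : ℝ, t ∈ Set.Icc (0 : ℝ) 1 → K ^ 2 * (t + 2) ^ (-2 * θ - 2 * ε) ≤ g t)
    (h2 : ∀ t : ℝ, 1 ≤ t →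
      C₂ / C₁ ^ 2 * (t + 2) ^ (-2 * θ - ε) - 3 * g t ≤ |deriv g t|) :
    ∀ t : ℝ, 0 ≤ t → K ^ 2 * (t + 2) ^ (-2 * θ - 2 * ε) ≤ g t := by
  intro t ht
  rcases le_total t 1 with h | h
  · exact h1 t ⟨ht, h⟩
  have hK0 : 0 < K ^ 2 := by positivity
  refine aux_core g (fun t => K ^ 2 * (t + 2) ^ (-2 * θ - 2 * ε))
    (fun t => K ^ 2 * (1 * (-2 * θ - 2 * ε) * (t + 2) ^ (-2 * θ - 2 * ε - 1))) hg hgnn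
    ?_ ?_ ?_ ?_ (h1 1 (by simp)) ?_ t h
  · intro x hx
    exact (((hasDerivAt_id x).add_const 2).rpow_const (Or.inl (by simp only [id]; linarith))).const_mul _
  · intro x hx
    have hp : 0 < (x + 2) ^ (-2 * θ - 2 * ε - 1) := Real.rpow_pos_of_pos (by linarith) _
    apply mul_neg_of_pos_of_neg hK0
    apply mul_neg_of_neg_of_pos _ hp
    linarith
  · intro x hx
    have hp : 0 < (x + 2) ^ (-2 * θ - 2 * ε) := Real.rpow_pos_of_pos (by linarith) _
    positivity
  · have h3 : Filter.Tendsto (fun x : ℝ => (x + 2) ^ (-(2 * θ + 2 * ε))) Filter.atTop (nhds 0) :=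
      (tendsto_rpow_neg_atTop (by linarith)).comp (Filter.tendsto_atTop_add_const_right _ 2 Filter.tendsto_id)
    have h4 := h3.const_mul (K ^ 2)
    rw [mul_zero] at h4
    convert h4 using 4
    ring
  · intro x hx hlt
    have h3 := h2 x hx
    have hp : 0 < (x + 2) ^ (-2 * θ - 2 * ε) := Real.rpow_pos_of_pos (by linarith) _
    have hq : (x + 2) ^ (-2 * θ - 2 * ε) ≤ (x + 2) ^ (-2 * θ - ε) :=
      Real.rpow_le_rpow_of_exponent_le (by linarith) (by linarith)
    have hr : (x + 2) ^ (-2 * θ - 2 * ε - 1) ≤ (x + 2) ^ (-2 * θ - 2 * ε) :=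
      Real.rpow_le_rpow_of_exponent_le (by linarith) (by linarith)
    have ha : 1 ≤ 2 * θ + 2 * ε := by linarith
    have hC : 6 * (2 * θ + 2 * ε) * K ^ 2 ≤ C₂ / C₁ ^ 2 := by
      rw [le_div_iff₀ (by positivity)] at hK2 ⊢
      linarith
    have e1 : 6 * (2 * θ + 2 * ε) * K ^ 2 * (x + 2) ^ (-2 * θ - 2 * ε)
        ≤ C₂ / C₁ ^ 2 * (x + 2) ^ (-2 * θ - ε) :=
      mul_le_mul hC hq hp.le (by positivity)
    have e2 : (2 * θ + 2 * ε) * K ^ 2 * (x + 2) ^ (-2 * θ - 2 * ε - 1)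
        ≤ (2 * θ + 2 * ε) * K ^ 2 * (x + 2) ^ (-2 * θ - 2 * ε) :=
      mul_le_mul_of_nonneg_left hr (by positivity)
    have e3 : 1 * (K ^ 2 * (x + 2) ^ (-2 * θ - 2 * ε))
        ≤ (2 * θ + 2 * ε) * (K ^ 2 * (x + 2) ^ (-2 * θ - 2 * ε)) :=
      mul_le_mul_of_nonneg_right ha (by positivity)
    generalize (x + 2) ^ (-2 * θ - 2 * ε) = A at *
    generalize (x + 2) ^ (-2 * θ - 2 * ε - 1) = B at *
    linarith
end

section
/- Let θ ≥ 1/2, ε > 0, D > 0, and K > 0 satisfy K² (2θ + 2ε) < 3D. Then there do not exist real numbers 1 ≤ t₁ < t₂ and a differentiable function g : ℝ → ℝ such that g′(t) ≤ −D (t + 2)^(−2θ−ε) for all t ∈ (t₁, t₂), g(t₁) = K² (t₁ + 2)^(−2θ−2ε), and g(t₂) = K² (t₂ + 2)^(−2θ−2ε). -/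
theorem stmt_3
    (θ ε D K : ℝ)
    (hθ : 1 / 2 ≤ θ) (hε : 0 < ε) (hD : 0 < D) (hK : 0 < K)
    (hK2 : K ^ 2 * (2 * θ + 2 * ε) < 3 * D) :
    ¬ ∃ (t₁ t₂ : ℝ) (g : ℝ → ℝ), 1 ≤ t₁ ∧ t₁ < t₂ ∧ Differentiable ℝ g ∧
      (∀ t ∈ Set.Ioo t₁ t₂, deriv g t ≤ -D * (t + 2) ^ (-2 * θ - ε)) ∧
      g t₁ = K ^ 2 * (t₁ + 2) ^ (-2 * θ - 2 * ε) ∧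
      g t₂ = K ^ 2 * (t₂ + 2) ^ (-2 * θ - 2 * ε) := by
  rintro ⟨t₁, t₂, g, h1, h12, hg, hd, e1, e2⟩
  have hder : ∀ x ∈ Set.Ioo t₁ t₂,
      HasDerivAt (fun t => g t - K ^ 2 * (t + 2) ^ (-2 * θ - 2 * ε))
        (deriv g x - K ^ 2 * (1 * (-2 * θ - 2 * ε) * (x + 2) ^ (-2 * θ - 2 * ε - 1))) x := by
    intro x hx
    have hx2 : x + 2 ≠ 0 := by linarith [hx.1]
    exact (hg x).hasDerivAt.sub
      ((((hasDerivAt_id x).add_const 2).rpow_const (Or.inl hx2)).const_mul (K ^ 2))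
  have hcont : ContinuousOn (fun t => g t - K ^ 2 * (t + 2) ^ (-2 * θ - 2 * ε))
      (Set.Icc t₁ t₂) := by
    refine hg.continuous.continuousOn.sub (continuousOn_const.mul ?_)
    refine ContinuousOn.rpow_const (by fun_prop) ?_
    intro x hx
    left
    linarith [hx.1]
  obtain ⟨c, hc, h0⟩ := exists_hasDerivAt_eq_zero h12 hcont (by simp only [e1, e2, sub_self]) hder
  have hcd := hd c hc
  have hx3 : 3 ≤ c + 2 := by linarith [hc.1]
  have hx0 : 0 < c + 2 := by linarith
  have hsplit : (c + 2) ^ (-2 * θ - 2 * ε - 1)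
      = (c + 2) ^ (-2 * θ - ε) * (c + 2) ^ (-(1 + ε)) := by
    rw [← Real.rpow_add hx0]
    congr 1
    ring
  have hA : 0 < (c + 2) ^ (-2 * θ - ε) := Real.rpow_pos_of_pos hx0 _
  have hB : (c + 2) ^ (-(1 + ε)) ≤ 1 / 3 := by
    have h3 : (c + 2) ^ (-(1 + ε)) ≤ (c + 2) ^ (-1 : ℝ) :=
      Real.rpow_le_rpow_of_exponent_le (by linarith) (by linarith)
    rw [Real.rpow_neg_one] at h3
    refine h3.trans ?_
    rw [inv_eq_one_div]
    exact one_div_le_one_div_of_le (by norm_num) hx3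
  rw [hsplit] at h0
  generalize (c + 2) ^ (-2 * θ - ε) = A at *
  generalize (c + 2) ^ (-(1 + ε)) = B at *
  have hM : 0 < K ^ 2 * (2 * θ + 2 * ε) := mul_pos (by positivity) (by linarith)
  have hMB : K ^ 2 * (2 * θ + 2 * ε) * B < D := by nlinarith
  have := mul_lt_mul_of_pos_right hMB hA
  nlinarith
end
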